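/- arXiv:2309.10378 — 2 statements merged into one kernel-verified Lean document; each statement's English description precedes it below -/
import Mathlib

section
/- Let (Ω, 𝒜, P) be a probability space, and for each ω ∈ Ω let Π_ω and Q_ω be probability measures on a measurable space (E, ℰ) depending measurably on ω. Let B ∈ ℰ and A ∈ 𝒜. If there exist C > 0 and δ > 0 such that ∫_A Π_ω(B^c) dP(ω) ≤ C e^{−δ}, then ∫_A Q_ω(B^c) dP(ω) ≤ (2/δ) [ ∫_A KL(Q_ω ‖ Π_ω) dP(ω) + C e^{−δ/2} ]. -/
open MeasureTheory ProbabilityTheory Filter Matrix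
open scoped ENNReal NNReal BigOperators Classical

noncomputable section

namespace GSVB

/-- Euclidean (ℓ2) norm of a finitely indexed real vector. -/
def l2 {ι : Type*} [Fintype ι] (v : ι → ℝ) : ℝ := Real.sqrt (∑ i, v i ^ 2)

/-- Maximal ℓ2 column norm of a matrix, ‖X‖. -/
def Xnorm {n p : ℕ} (X : Matrix (Fin n) (Fin p) ℝ) : ℝ :=
  ⨆ j : Fin p, l2 (fun i => X i j)

variable {n p M : ℕ}

/-- The set of coordinate indices assigned to group `k` (groups are given by the
assignment map `g : Fin p → Fin M`, so they automatically partition the coordinates). -/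
def grp (g : Fin p → Fin M) (k : Fin M) : Finset (Fin p) :=
  Finset.univ.filter fun j => g j = k

/-- Size `m_k` of group `k`. -/
def msize (g : Fin p → Fin M) (k : Fin M) : ℕ := (grp g k).card

/-- Maximal group size `m_max`. -/
def mmax (g : Fin p → Fin M) : ℕ := Finset.univ.sup (msize g)

/-- Group norm ‖β_{G_k}‖₂. -/
def gnorm (g : Fin p → Fin M) (β : Fin p → ℝ) (k : Fin M) : ℝ :=
  Real.sqrt (∑ j ∈ grp g k, β j ^ 2)

/-- ‖β‖_{2,1} = Σ_k ‖β_{G_k}‖₂. -/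
def norm21 (g : Fin p → Fin M) (β : Fin p → ℝ) : ℝ := ∑ k, gnorm g β k

/-- Group support S_β = {k : β_{G_k} ≠ 0}. -/
def gsupp (g : Fin p → Fin M) (β : Fin p → ℝ) : Finset (Fin M) :=
  Finset.univ.filter fun k => ∃ j ∈ grp g k, β j ≠ 0

/-- Compatibility number φ(S). -/
def compat (X : Matrix (Fin n) (Fin p) ℝ) (g : Fin p → Fin M) (S : Finset (Fin M)) : ℝ :=
  sInf { r : ℝ | ∃ β : Fin p → ℝ,
    ((∑ k ∈ Sᶜ, gnorm g β k) ≤ 7 * (∑ k ∈ S, gnorm g β k)) ∧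
    (∃ k ∈ S, gnorm g β k ≠ 0) ∧
    r = l2 (X.mulVec β) * Real.sqrt S.card / (Xnorm X * ∑ k ∈ S, gnorm g β k) }

/-- Uniform compatibility φ̄(s). -/
def ucompat (X : Matrix (Fin n) (Fin p) ℝ) (g : Fin p → Fin M) (s : ℝ) : ℝ :=
  sInf { r : ℝ | ∃ β : Fin p → ℝ, 1 ≤ (gsupp g β).card ∧ ((gsupp g β).card : ℝ) ≤ s ∧
    r = l2 (X.mulVec β) * Real.sqrt ((gsupp g β).card) / (Xnorm X * norm21 g β) }

/-- Smallest scaled sparse singular value φ̃(s). -/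
def ssv (X : Matrix (Fin n) (Fin p) ℝ) (g : Fin p → Fin M) (s : ℝ) : ℝ :=
  sInf { r : ℝ | ∃ β : Fin p → ℝ, 1 ≤ (gsupp g β).card ∧ ((gsupp g β).card : ℝ) ≤ s ∧
    r = l2 (X.mulVec β) / (Xnorm X * l2 β) }

/-- Normalizing constant Δ_m = 2^{-m} π^{(1-m)/2} Γ((m+1)/2)^{-1}. -/
def Δm (m : ℕ) : ℝ :=
  (2 : ℝ) ^ (-(m : ℝ)) * Real.pi ^ ((1 - (m : ℝ)) / 2) * (Real.Gamma (((m : ℝ) + 1) / 2))⁻¹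

/-- Value of the slab density Ψ_{λ,m} at a point with norm `r`:
Ψ_{λ,m}(b) = Δ_m λ^m exp(-λ‖b‖₂). -/
def psiDens (lam : ℝ) (m : ℕ) (r : ℝ) : ℝ := Δm m * lam ^ m * Real.exp (-lam * r)

/-- Coordinates of group `k` as a subtype. -/
abbrev GrpIdx (g : Fin p → Fin M) (k : Fin M) := { j : Fin p // g j = k }

/-- Slab measure on the coordinates of group `k`: density Ψ_{λ,m_k} w.r.t. Lebesgue. -/
def slab (g : Fin p → Fin M) (lam : ℝ) (k : Fin M) : Measure (GrpIdx g k → ℝ) :=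
  (volume : Measure (GrpIdx g k → ℝ)).withDensity fun b =>
    ENNReal.ofReal (psiDens lam (Fintype.card (GrpIdx g k)) (l2 b))

/-- Spike or slab on group `k`, according to whether `k` belongs to the model `S`. -/
def priorGroup (g : Fin p → Fin M) (lam : ℝ) (S : Finset (Fin M)) (k : Fin M) :
    Measure (GrpIdx g k → ℝ) :=
  if k ∈ S then slab g lam k else Measure.dirac 0

/-- Glue group-wise vectors into a vector in ℝ^p. -/
def assemble (g : Fin p → Fin M) (f : ∀ k, GrpIdx g k → ℝ) : Fin p → ℝ :=
  fun j => f (g j) ⟨j, rfl⟩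

/-- The model selection (group spike-and-slab) prior on ℝ^p. -/
def prior (g : Fin p → Fin M) (lam : ℝ) (piM : ℕ → ℝ) : Measure (Fin p → ℝ) :=
  ∑ S : Finset (Fin M),
    (ENNReal.ofReal (piM S.card / (M.choose S.card))) •
      Measure.map (assemble g) (Measure.pi (priorGroup g lam S))

/-- Gaussian likelihood ratio Λ_β(Y). -/
def lik (X : Matrix (Fin n) (Fin p) ℝ) (β0 β : Fin p → ℝ) (Y : Fin n → ℝ) : ℝ :=
  Real.exp (-(1/2) * (∑ i, (X.mulVec (β - β0)) i ^ 2)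
    + ∑ i, (Y i - X.mulVec β0 i) * (X.mulVec (β - β0)) i)

/-- Unnormalized posterior. -/
def postUn (X : Matrix (Fin n) (Fin p) ℝ) (g : Fin p → Fin M) (lam : ℝ) (piM : ℕ → ℝ)
    (β0 : Fin p → ℝ) (Y : Fin n → ℝ) : Measure (Fin p → ℝ) :=
  (prior g lam piM).withDensity fun β => ENNReal.ofReal (lik X β0 β Y)

/-- Posterior distribution Π(·|Y). -/
def posterior (X : Matrix (Fin n) (Fin p) ℝ) (g : Fin p → Fin M) (lam : ℝ) (piM : ℕ → ℝ)
    (β0 : Fin p → ℝ) (Y : Fin n → ℝ) : Measure (Fin p → ℝ) :=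
  (postUn X g lam piM β0 Y Set.univ)⁻¹ • postUn X g lam piM β0 Y

/-- Law of the data Y = Xβ₀ + ε, ε ~ N_n(0, I_n). -/
def Pdata (X : Matrix (Fin n) (Fin p) ℝ) (β0 : Fin p → ℝ) : Measure (Fin n → ℝ) :=
  Measure.pi fun i => gaussianReal (X.mulVec β0 i) 1

/-- Kullback–Leibler divergence KL(Q‖P) (equal to +∞ when not defined). -/
def KL {α : Type*} [MeasurableSpace α] (Q P : Measure α) : ℝ≥0∞ :=
  if Q ≪ P ∧ Integrable (llr Q P) Q then ENNReal.ofReal (∫ x, llr Q P x ∂Q) else ⊤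

/-- Variational family 𝒬 (diagonal covariance matrices within groups). -/
def famQ (g : Fin p → Fin M) : Set (Measure (Fin p → ℝ)) :=
  { Q | ∃ (γ : Fin M → ℝ) (μv : Fin p → ℝ) (σ : Fin p → ℝ≥0),
      (∀ k, γ k ∈ Set.Icc (0:ℝ) 1) ∧ (∀ j, 0 < σ j) ∧
      Q = Measure.map (assemble g) (Measure.pi fun k =>
        ENNReal.ofReal (γ k) •
            Measure.pi (fun j : GrpIdx g k => gaussianReal (μv j.1) (σ j.1))
          + ENNReal.ofReal (1 - γ k) • Measure.dirac 0) }

/-- Density of a multivariate Gaussian with mean `μv` and covariance `S`. -/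
def gaussDens {ι : Type*} [Fintype ι] [DecidableEq ι] (μv : ι → ℝ) (S : Matrix ι ι ℝ)
    (x : ι → ℝ) : ℝ :=
  (2 * Real.pi) ^ (-(Fintype.card ι : ℝ) / 2) * S.det ^ (-(1:ℝ)/2) *
    Real.exp (-(1/2) * ((x - μv) ⬝ᵥ S⁻¹.mulVec (x - μv)))

/-- Multivariate Gaussian measure N(μv, S). -/
def mvGauss {ι : Type*} [Fintype ι] [DecidableEq ι] (μv : ι → ℝ) (S : Matrix ι ι ℝ) :
    Measure (ι → ℝ) :=
  (volume : Measure (ι → ℝ)).withDensity fun x => ENNReal.ofReal (gaussDens μv S x)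

/-- Variational family 𝒬′ (arbitrary positive definite covariance within groups). -/
def famQ' (g : Fin p → Fin M) : Set (Measure (Fin p → ℝ)) :=
  { Q | ∃ (γ : Fin M → ℝ) (μv : Fin p → ℝ)
      (Sig : ∀ k : Fin M, Matrix (GrpIdx g k) (GrpIdx g k) ℝ),
      (∀ k, γ k ∈ Set.Icc (0:ℝ) 1) ∧ (∀ k, (Sig k).PosDef) ∧
      Q = Measure.map (assemble g) (Measure.pi fun k =>
        ENNReal.ofReal (γ k) • mvGauss (fun j => μv j.1) (Sig k)
          + ENNReal.ofReal (1 - γ k) • Measure.dirac 0) }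

/-- ‖X_{G_k}ᵀ u‖₂. -/
def grpTnorm (X : Matrix (Fin n) (Fin p) ℝ) (g : Fin p → Fin M) (k : Fin M)
    (u : Fin n → ℝ) : ℝ :=
  Real.sqrt (∑ j ∈ grp g k, (∑ i, X i j * u i) ^ 2)

/-- The event 𝒯₀. -/
def T0 (X : Matrix (Fin n) (Fin p) ℝ) (g : Fin p → Fin M) (β0 : Fin p → ℝ) :
    Set (Fin n → ℝ) :=
  { Y | ∀ k : Fin M, grpTnorm X g k (Y - X.mulVec β0) ≤
      3 * Xnorm X * Real.sqrt (Real.log M) }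

/-- The event 𝒯₁(Γ, ε, κ). -/
def T1 (X : Matrix (Fin n) (Fin p) ℝ) (g : Fin p → Fin M) (lam : ℝ) (piM : ℕ → ℝ)
    (β0 : Fin p → ℝ) (Γv εv κv : ℝ) : Set (Fin n → ℝ) :=
  T0 X g β0 ∩
    { Y | posterior X g lam piM β0 Y { β | Γv < ((gsupp g β).card : ℝ) } ≤ 1/4 } ∩
    { Y | posterior X g lam piM β0 Y { β | εv < l2 (β - β0) } ≤
        ENNReal.ofReal (Real.exp (-κv)) }


/-- Young's inequality for the conjugate pair `InformationTheory.klFun` and `t ↦ exp t - 1`. -/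
lemma mul_le_klFun_add_exp {q : ℝ} (hq : 0 ≤ q) (t : ℝ) :
    t * q ≤ InformationTheory.klFun q + Real.exp t := by
  rw [InformationTheory.klFun_apply]
  rcases hq.eq_or_lt with rfl | hq
  · simpa using by positivity
  · have h : q * (t - Real.log q + 1) ≤ q * Real.exp (t - Real.log q) :=
      mul_le_mul_of_nonneg_left (Real.add_one_le_exp _) hq.le
    rw [Real.exp_sub, Real.exp_log hq, mul_div_cancel₀ _ hq.ne'] at h
    linarith

lemma KL_eq_klDiv {α : Type*} [MeasurableSpace α] (Q P : Measure α)
    [IsProbabilityMeasure Q] [IsProbabilityMeasure P] :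
    KL Q P = InformationTheory.klDiv Q P := by
  simp [KL, InformationTheory.klDiv_def]

/-- Change of measure: the probability of an event under `Q` is controlled by its probability
under `P` and the Kullback–Leibler divergence. -/
lemma ofReal_mul_measure_le_klDiv_add {α : Type*} [MeasurableSpace α] (Q P : Measure α)
    [IsFiniteMeasure Q] [IsFiniteMeasure P] (s : Set α)
    {t : ℝ} (ht : 0 ≤ t) :
    ENNReal.ofReal t * Q s ≤
      InformationTheory.klDiv Q P + ENNReal.ofReal (Real.exp t) * P s := by
  by_cases hQP : Q ≪ P
  swap
  · simp [InformationTheory.klDiv_of_not_ac hQP]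
  rw [InformationTheory.klDiv_eq_lintegral_klFun_of_ac hQP]
  calc ENNReal.ofReal t * Q s
      = ∫⁻ x in s, ENNReal.ofReal t * Q.rnDeriv P x ∂P := by
        rw [lintegral_const_mul' _ _ ENNReal.ofReal_ne_top, Measure.setLIntegral_rnDeriv hQP]
    _ ≤ ∫⁻ x in s, (ENNReal.ofReal (InformationTheory.klFun (Q.rnDeriv P x).toReal)
          + ENNReal.ofReal (Real.exp t)) ∂P := by
        refine lintegral_mono_ae (ae_restrict_of_ae ?_)
        filter_upwards [Q.rnDeriv_ne_top P] with x hx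
        rw [← ENNReal.ofReal_add (InformationTheory.klFun_nonneg ENNReal.toReal_nonneg)
          (Real.exp_nonneg t)]
        conv_lhs => rw [← ENNReal.ofReal_toReal hx, ← ENNReal.ofReal_mul ht]
        exact ENNReal.ofReal_le_ofReal (mul_le_klFun_add_exp ENNReal.toReal_nonneg t)
    _ ≤ _ := by
        rw [lintegral_add_right _ measurable_const, setLIntegral_const]
        gcongr
        exact Measure.restrict_le_self

/-- Transfer of exponentially small posterior probability to the variational posterior
(Theorem 5 of Ray & Szabó). -/
theorem kl_transfer {Ω E : Type*} [MeasurableSpace Ω] [MeasurableSpace E]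
    (P : Measure Ω) [IsProbabilityMeasure P]
    (Pk Qk : ProbabilityTheory.Kernel Ω E)
    [ProbabilityTheory.IsMarkovKernel Pk] [ProbabilityTheory.IsMarkovKernel Qk]
    (B : Set E) (hB : MeasurableSet B) (A : Set Ω) (hA : MeasurableSet A)
    (C δ : ℝ) (hC : 0 < C) (hδ : 0 < δ)
    (h : (∫⁻ ω in A, Pk ω Bᶜ ∂P) ≤ ENNReal.ofReal (C * Real.exp (-δ))) :
    (∫⁻ ω in A, Qk ω Bᶜ ∂P) ≤
      ENNReal.ofReal (2 / δ) *
        ((∫⁻ ω in A, KL (Qk ω) (Pk ω) ∂P) + ENNReal.ofReal (C * Real.exp (-δ / 2))) := by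
  have hδ2 : 0 < δ / 2 := half_pos hδ
  have hmeas : Measurable fun ω => ENNReal.ofReal (Real.exp (δ / 2)) * Pk ω Bᶜ :=
    (Pk.measurable_coe hB.compl).const_mul _
  have hQ : ENNReal.ofReal (δ / 2) * ∫⁻ ω in A, Qk ω Bᶜ ∂P ≤
      (∫⁻ ω in A, KL (Qk ω) (Pk ω) ∂P) + ENNReal.ofReal (C * Real.exp (-δ / 2)) := by
    calc ENNReal.ofReal (δ / 2) * ∫⁻ ω in A, Qk ω Bᶜ ∂P
        = ∫⁻ ω in A, ENNReal.ofReal (δ / 2) * Qk ω Bᶜ ∂P :=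
          (lintegral_const_mul' _ _ ENNReal.ofReal_ne_top).symm
      _ ≤ ∫⁻ ω in A, (KL (Qk ω) (Pk ω) + ENNReal.ofReal (Real.exp (δ / 2)) * Pk ω Bᶜ) ∂P := by
          refine lintegral_mono fun ω => ?_
          rw [KL_eq_klDiv]
          exact ofReal_mul_measure_le_klDiv_add _ _ _ hδ2.le
      _ = (∫⁻ ω in A, KL (Qk ω) (Pk ω) ∂P)
            + ENNReal.ofReal (Real.exp (δ / 2)) * ∫⁻ ω in A, Pk ω Bᶜ ∂P := by
          rw [lintegral_add_right _ hmeas, lintegral_const_mul' _ _ ENNReal.ofReal_ne_top]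
      _ ≤ (∫⁻ ω in A, KL (Qk ω) (Pk ω) ∂P)
            + ENNReal.ofReal (Real.exp (δ / 2)) * ENNReal.ofReal (C * Real.exp (-δ)) := by
          gcongr
      _ = _ := by
          rw [← ENNReal.ofReal_mul (Real.exp_nonneg _), mul_left_comm, ← Real.exp_add]
          ring_nf
  calc ∫⁻ ω in A, Qk ω Bᶜ ∂P
      = ENNReal.ofReal (2 / δ) * (ENNReal.ofReal (δ / 2) * ∫⁻ ω in A, Qk ω Bᶜ ∂P) := by
        rw [← mul_assoc, ← ENNReal.ofReal_mul (by positivity),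
          div_mul_div_cancel₀ hδ.ne', div_self two_ne_zero, ENNReal.ofReal_one, one_mul]
    _ ≤ _ := by gcongr

end GSVB
end
end

section
/- For every integer m ≥ 1, the Gamma function satisfies Γ((m+1)/2) ≤ 2 e^{−1/2} √π · m^{m/2} · (2e)^{−(m−1)/2}. -/
open MeasureTheory ProbabilityTheory Filter Matrix
open scoped ENNReal NNReal BigOperators Classical

noncomputable section

namespace GSVB

variable {n p M : ℕ}

/-- Explicit Stirling upper bound `n! ≤ e √n (n/e)^n`, in logarithmic form. -/
lemma log_factorial_le {n : ℕ} (hn : n ≠ 0) :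
    Real.log (n.factorial : ℝ) ≤ 1 + ((n : ℝ) + 1 / 2) * Real.log n - n := by
  obtain ⟨k, rfl⟩ := Nat.exists_eq_succ_of_ne_zero hn
  have hanti := Stirling.log_stirlingSeq'_antitone (Nat.zero_le k)
  simp only [Function.comp_apply, Stirling.log_stirlingSeq_formula] at hanti
  have hpos : (0 : ℝ) < (k.succ : ℝ) := by positivity
  rw [Real.log_mul two_ne_zero hpos.ne', Real.log_div hpos.ne' (Real.exp_pos 1).ne'] at hanti
  norm_num [Real.log_div] at hanti ⊢
  linarith

/-- Midpoint log-convexity of `Γ` at the integers, combined with Stirling's bound. -/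
lemma log_Gamma_nat_add_half_le {n : ℕ} (hn : n ≠ 0) :
    Real.log (Real.Gamma ((n : ℝ) + 1 / 2)) ≤ 1 + (n : ℝ) * Real.log n - n := by
  have hfeq : ∀ {y : ℝ}, 0 < y →
      (Real.log ∘ Real.Gamma) (y + 1) = (Real.log ∘ Real.Gamma) y + Real.log y := by
    intro y hy
    simp only [Function.comp_apply]
    rw [Real.Gamma_add_one hy.ne', Real.log_mul hy.ne' (Real.Gamma_pos_of_pos hy).ne', add_comm]
  have hmid := Real.BohrMollerup.f_add_nat_le Real.convexOn_log_Gamma hfeq hn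
    (x := 1 / 2) (by norm_num) (by norm_num)
  have hstep := hfeq (y := n) (by positivity)
  simp only [Function.comp_apply, Real.Gamma_nat_eq_factorial] at hmid hstep
  linarith [log_factorial_le hn]

lemma log_Gamma_succ_half_le {m : ℕ} (hm : 1 ≤ m) :
    Real.log (Real.Gamma (((m : ℝ) + 1) / 2)) ≤
      3 / 2 + (m : ℝ) / 2 * Real.log ((m : ℝ) / 2) - (m : ℝ) / 2 := by
  obtain ⟨n, rfl | rfl⟩ := m.even_or_odd'
  · have h := log_Gamma_nat_add_half_le (n := n) (by omega)
    push_cast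
    rw [show (2 * (n : ℝ) + 1) / 2 = n + 1 / 2 by ring, show 2 * (n : ℝ) / 2 = n by ring]
    linarith
  · push_cast
    rw [show (2 * (n : ℝ) + 1 + 1) / 2 = n + 1 by ring,
      show (2 * (n : ℝ) + 1) / 2 = n + 1 / 2 by ring, Real.Gamma_nat_eq_factorial]
    rcases eq_or_ne n 0 with rfl | hn
    · have := Real.log_two_lt_d9
      norm_num [Real.log_div]
      linarith
    · have hpos : (0 : ℝ) < n := by positivity
      have hlog : Real.log n ≤ Real.log ((n : ℝ) + 1 / 2) :=
        Real.log_le_log hpos (by linarith)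
      have := mul_le_mul_of_nonneg_left hlog (by positivity : (0 : ℝ) ≤ n + 1 / 2)
      linarith [log_factorial_le hn]

lemma three_le_log_eight_mul_pi : 3 ≤ Real.log (8 * Real.pi) := by
  rw [Real.le_log_iff_exp_le (by positivity)]
  calc Real.exp 3 = Real.exp 1 ^ 3 := by rw [← Real.exp_nat_mul]; norm_num
    _ ≤ 2.7182818286 ^ 3 := by gcongr; exact Real.exp_one_lt_d9.le
    _ ≤ 8 * Real.pi := by linarith [Real.pi_gt_three]

/-- Nonasymptotic upper bound on the Gamma function:
Γ((m+1)/2) ≤ 2 e^{-1/2} √π m^{m/2} (2e)^{-(m-1)/2} for every integer m ≥ 1. -/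
theorem gamma_succ_half_le (m : ℕ) (hm : 1 ≤ m) :
    Real.Gamma (((m : ℝ) + 1) / 2) ≤
      2 * Real.exp (-(1:ℝ)/2) * Real.sqrt Real.pi *
        (m : ℝ) ^ ((m : ℝ) / 2) * (2 * Real.exp 1) ^ (-((m : ℝ) - 1) / 2) := by
  have hm0 : (0 : ℝ) < m := by exact_mod_cast hm
  have hΓ : 0 < Real.Gamma (((m : ℝ) + 1) / 2) := Real.Gamma_pos_of_pos (by positivity)
  have hpi := Real.pi_pos
  rw [← Real.log_le_log_iff hΓ (by positivity)]
  have hbound := log_Gamma_succ_half_le hm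
  have hconst := three_le_log_eight_mul_pi
  rw [Real.log_mul (by norm_num) hpi.ne', show (8 : ℝ) = 2 ^ 3 by norm_num, Real.log_pow]
    at hconst
  rw [Real.log_div hm0.ne' two_ne_zero] at hbound
  rw [Real.log_mul (by positivity) (by positivity), Real.log_mul (by positivity) (by positivity),
    Real.log_mul (by positivity) (by positivity), Real.log_mul (by positivity) (by positivity),
    Real.log_exp, Real.log_sqrt hpi.le, Real.log_rpow hm0, Real.log_rpow (by positivity),
    Real.log_mul two_ne_zero (Real.exp_pos 1).ne', Real.log_exp]
  push_cast at hconst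
  linarith

end GSVB
end
end
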